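/- Let F be an entire function with F^{(n)}(0) ≠ 0 for all n ≥ 0, let g be holomorphic in a neighborhood of 0, and let q_1,…,q_m be distinct complex numbers. Then there exists a unique tuple of complex coefficients (c_1,…,c_m) such that the function f(z) = Σ_{j=1}^m c_j F(q_j z) satisfies f^{(j)}(0) = g^{(j)}(0) for all 0 ≤ j ≤ m−1. -/

import Mathlib

open Finset

noncomputable section

/-- If `F` is entire with `F^(n)(0) ≠ 0` for all `n`, `g` is holomorphic near `0`, and
`q_1,…,q_m` are distinct, then there is a unique tuple of coefficients `c` such that the
`F`-polynomial `z ↦ ∑ c j • F (q j z)` interpolates `g` to order `m` at `0`. -/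
theorem stmt2 (F : ℂ → ℂ) (hF : Differentiable ℂ F)
    (hFn : ∀ n : ℕ, iteratedDeriv n F 0 ≠ 0)
    (g : ℂ → ℂ) (hg : AnalyticAt ℂ g 0)
    {m : ℕ} (q : Fin m → ℂ) (hq : Function.Injective q) :
    ∃! c : Fin m → ℂ,
      ∀ j < m, iteratedDeriv j (fun z => ∑ i, c i * F (q i * z)) 0 = iteratedDeriv j g 0 := by
  have key : ∀ (c : Fin m → ℂ) (j : ℕ),
      iteratedDeriv j (fun z => ∑ i, c i * F (q i * z)) 0
        = (∑ i, c i * q i ^ j) * iteratedDeriv j F 0 := by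
    intro c j
    have hc : ContDiff ℂ j F := hF.contDiff
    have hci : ∀ i, ContDiff ℂ j (fun z => F (q i * z)) := fun i =>
      hc.comp (contDiff_const.mul contDiff_id)
    rw [iteratedDeriv_fun_sum (fun i _ => (contDiff_const.mul (hci i)).contDiffAt), Finset.sum_mul]
    refine Finset.sum_congr rfl fun i _ => ?_
    rw [iteratedDeriv_const_mul_field, iteratedDeriv_comp_const_mul hc]
    simp [mul_assoc]
  have hdet : IsUnit (Matrix.vandermonde q) := by
    rw [Matrix.isUnit_iff_isUnit_det, isUnit_iff_ne_zero]
    exact Matrix.det_vandermonde_ne_zero_iff.2 hq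
  have hiff : ∀ c : Fin m → ℂ,
      (∀ j < m, iteratedDeriv j (fun z => ∑ i, c i * F (q i * z)) 0 = iteratedDeriv j g 0) ↔
      Matrix.vecMul c (Matrix.vandermonde q)
        = fun j : Fin m => iteratedDeriv j g 0 / iteratedDeriv j F 0 := by
    intro c
    constructor
    · intro h
      funext j
      rw [eq_div_iff (hFn j), ← h j j.2, key]
      simp [Matrix.vecMul, dotProduct, Matrix.vandermonde_apply]
    · intro h j hj
      have h1 := congrFun h ⟨j, hj⟩
      rw [eq_div_iff (hFn _)] at h1
      rw [key, ← h1]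
      simp [Matrix.vecMul, dotProduct, Matrix.vandermonde_apply]
  obtain ⟨c, hc⟩ := Matrix.vecMul_surjective_iff_isUnit.2 hdet
    (fun j : Fin m => iteratedDeriv j g 0 / iteratedDeriv j F 0)
  refine ⟨c, (hiff c).2 hc, fun d hd => ?_⟩
  exact Matrix.vecMul_injective_iff_isUnit.2 hdet (((hiff d).1 hd).trans hc.symm)
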